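/- arXiv:1801.08229 — 2 statements merged into one kernel-verified Lean document; each statement's English description precedes it below -/
import Mathlib

section
/- There exists a constant C > 0 depending only on n such that, for every abstract Monge–Ampère pairing setup (W, B, 𝟙, F) as in the context, every choice of reference element φ_ref ∈ F, and all φ, ψ ∈ F: max{|I(φ) − I(ψ)|, |J(φ) − J(ψ)|} ≤ C · I(φ, ψ)^{1/2ⁿ} · (max{J(φ), J(ψ)})^{1 − 1/2ⁿ}. -/
open Finset

/-- Abstract Monge–Ampère pairing setup with `n = m + 1`: a symmetric multilinear
form `B` on `W^(n+1) = W^(m+2)`, a unit element `one`, and a nonempty convex set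
`F ⊆ W`, satisfying (i) normalization `B(𝟙, φ₁, …, φₙ) = 1`, (ii) integration by
parts `B(u, 𝟙, g₂, …, gₙ) = 0` for `u ∈ W₀` and `gᵢ ∈ W' = span (F ∪ {𝟙})`, and
(iii) the Cauchy–Schwarz / local Hodge index inequality
`B(u, u, φ₁, …, φ_{n-1}) ≤ 0` for `u ∈ W₀`. -/
structure MASetup (m : ℕ) (W : Type*) [AddCommGroup W] [Module ℝ W] where
  B : MultilinearMap ℝ (fun _ : Fin (m + 2) => W) ℝ
  symm : ∀ (v : Fin (m + 2) → W) (σ : Equiv.Perm (Fin (m + 2))), B (v ∘ σ) = B v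
  one : W
  F : Set W
  Fne : F.Nonempty
  Fconv : Convex ℝ F
  unital : ∀ g : Fin (m + 1) → W, (∀ i, g i ∈ F) → B (Fin.cons one g) = 1
  parts : ∀ u ∈ Submodule.span ℝ ({x | ∃ φ ∈ F, ∃ ψ ∈ F, x = φ - ψ} ∪ {one}),
      ∀ g : Fin m → W, (∀ i, g i ∈ Submodule.span ℝ (F ∪ {one})) →
        B (Fin.cons u (Fin.cons one g)) = 0
  hodge : ∀ u ∈ Submodule.span ℝ ({x | ∃ φ ∈ F, ∃ ψ ∈ F, x = φ - ψ} ∪ {one}),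
      ∀ g : Fin m → W, (∀ i, g i ∈ F) → B (Fin.cons u (Fin.cons u g)) ≤ 0

namespace MASetup

variable {m : ℕ} {W : Type*} [AddCommGroup W] [Module ℝ W]

/-- The vector with `j` copies of `φ` followed by copies of `ψ`. -/
def mixVec (φ ψ : W) (j : ℕ) {k : ℕ} : Fin k → W := fun i => if (i : ℕ) < j then φ else ψ

/-- The linear span `W₀` of the differences of elements of `F` together with `one`. -/
def W0 (S : MASetup m W) : Submodule ℝ W :=
  Submodule.span ℝ ({x | ∃ φ ∈ S.F, ∃ ψ ∈ S.F, x = φ - ψ} ∪ {S.one})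

/-- The Monge–Ampère energy
`E(φ, ψ) = (n+1)⁻¹ ∑_{j=0}^{n} B(φ-ψ, φ, …, φ, ψ, …, ψ)` with `j` copies of `φ`
and `n - j` copies of `ψ` among the last `n` arguments. -/
noncomputable def energy (S : MASetup m W) (φ ψ : W) : ℝ :=
  ((m : ℝ) + 2)⁻¹ * ∑ j ∈ Finset.range (m + 2), S.B (Fin.cons (φ - ψ) (mixVec φ ψ j))

/-- The functional `I(φ, ψ) = B(φ-ψ, ψ, …, ψ) - B(φ-ψ, φ, …, φ)`. -/
noncomputable def Ifun (S : MASetup m W) (φ ψ : W) : ℝ :=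
  S.B (Fin.cons (φ - ψ) fun _ => ψ) - S.B (Fin.cons (φ - ψ) fun _ => φ)

/-- The functional `J_ψ(φ) = B(φ-ψ, ψ, …, ψ) - E(φ, ψ)`. -/
noncomputable def Jfun (S : MASetup m W) (ψ φ : W) : ℝ :=
  S.B (Fin.cons (φ - ψ) fun _ => ψ) - S.energy φ ψ

end MASetup

/-!
Write `⟨x, y⟩_g = -B(x, y, g)` and `u = φ - ψ`. Telescoping reduces both differences to bounding
`⟨u, x - y⟩_g` for `x, y, g₁, …, gₘ` in the triangle `K` spanned by `φ`, `ψ` and the reference `r`.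

* `⟨x - y, x - y⟩_g ≤ c M` on `K` for `M = max (J φ) (J ψ)`: replacing an entry of `g` by the
  centroid `χ` costs a factor `3`, since `χ` is `1/3` of that entry plus `2/3` of another point of
  `K`. With all entries `χ`, passing to the midpoint `ω` of `χ` and `x` costs a further `2 ^ m`,
  and `⟨ω - r, ω - r⟩` with all entries `ω` is at most `(m + 2) J(ω) ≤ (m + 2) M`, `J` being convex.
* Take every entry of `g` equal to the midpoint `τ` of `φ` and `ψ`. The same bound for the
  reference `ψ` gives `⟨u, u⟩_g ≤ c I(φ, ψ)`.
* Trade the entries `τ` for arbitrary points of `K`, one at a time. By symmetry, changing one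
  entry from `τ` to `x` changes `b = ⟨u, u⟩` by the difference of `⟨u, x - τ⟩` with that entry
  equal to `φ` and to `ψ`. By Cauchy–Schwarz, and as the two values of `⟨u, u⟩` there add up to
  `2 b`, the new value is `O(√(b M))`. So each of the `m` trades halves the exponent of `I`.
* A last Cauchy–Schwarz for `⟨u, x - y⟩_g` halves it once more, which gives `1 / 2 ^ (m + 1)`.
-/

open MASetup (mixVec)

theorem pow_card_mul_map_le_map {ι R : Type*} [Fintype ι] [CommSemiring R]
    [PartialOrder R] [IsOrderedRing R] {M : ι → Type*} [∀ i, AddCommMonoid (M i)]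
    [∀ i, Module R (M i)] (f : MultilinearMap R M R) {F : ∀ i, Set (M i)}
    (hf : ∀ g, (∀ i, g i ∈ F i) → 0 ≤ f g) {t : R} (ht : 0 ≤ t) {g h : ∀ i, M i}
    (hg : ∀ i, g i ∈ F i) (hh : ∀ i, h i ∈ F i)
    (hgh : ∀ i, ∃ c : R, 0 ≤ c ∧ ∃ y ∈ F i, h i = t • g i + c • y) :
    t ^ Fintype.card ι * f g ≤ f h := by
  classical
  suffices key : ∀ s : Finset ι, t ^ #s * f g ≤ f (s.piecewise h g) by
    simpa using key univ
  intro s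
  induction s using Finset.induction_on with
  | empty => simp
  | insert i s hi ih =>
    obtain ⟨c, hc, y, hy, hiy⟩ := hgh i
    have hself : Function.update (s.piecewise h g) i (g i) = s.piecewise h g := by
      simp [hi]
    have hpos : 0 ≤ f (Function.update (s.piecewise h g) i y) :=
      hf _ fun j => by
        obtain rfl | hj := eq_or_ne j i
        · simpa using hy
        · simpa [hj] using s.piecewise_cases h g (· ∈ F j) (hh j) (hg j)
    calc t ^ #(insert i s) * f g = t * (t ^ #s * f g) := by
          rw [card_insert_of_notMem hi, pow_succ', mul_assoc]
      _ ≤ t * f (s.piecewise h g) := mul_le_mul_of_nonneg_left ih ht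
      _ ≤ t * f (s.piecewise h g) + c * f (Function.update (s.piecewise h g) i y) :=
          le_add_of_nonneg_right (mul_nonneg hc hpos)
      _ = f ((insert i s).piecewise h g) := by
          rw [piecewise_insert, hiy, f.map_update_add, f.map_update_smul, f.map_update_smul, hself,
            smul_eq_mul, smul_eq_mul]

theorem abs_map_sub_map_le_card_mul {ι R : Type*} [Fintype ι] [DecidableEq ι] [CommRing R]
    [LinearOrder R] [IsOrderedRing R] {M : ι → Type*} [∀ i, AddCommGroup (M i)]
    [∀ i, Module R (M i)] (f : MultilinearMap R M R) {g h : ∀ i, M i} {D : R}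
    (hD : ∀ (s : Finset ι) (i : ι), |f (Function.update (s.piecewise h g) i (h i - g i))| ≤ D) :
    |f h - f g| ≤ Fintype.card ι * D := by
  suffices key : ∀ s : Finset ι, |f (s.piecewise h g) - f g| ≤ #s * D by
    simpa using key univ
  intro s
  induction s using Finset.induction_on with
  | empty => simp
  | insert i s hi ih =>
    have hstep : f ((insert i s).piecewise h g) - f (s.piecewise h g) =
        f (Function.update (s.piecewise h g) i (h i - g i)) := by
      have hself : Function.update (s.piecewise h g) i (g i) = s.piecewise h g := by simp [hi]
      rw [piecewise_insert, f.map_update_sub, hself]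
    calc |f ((insert i s).piecewise h g) - f g|
        ≤ |f ((insert i s).piecewise h g) - f (s.piecewise h g)| + |f (s.piecewise h g) - f g| :=
          abs_sub_le _ _ _
      _ ≤ D + #s * D := add_le_add (hstep ▸ hD s i) ih
      _ = #(insert i s) * D := by rw [card_insert_of_notMem hi]; push_cast; ring

theorem map_cons_sub {R M N : Type*} [CommRing R] [AddCommGroup M] [AddCommGroup N] [Module R M]
    [Module R N] {k : ℕ} (f : MultilinearMap R (fun _ : Fin (k + 1) => M) N) (x y : M)
    (g : Fin k → M) : f (Fin.cons (x - y) g) = f (Fin.cons x g) - f (Fin.cons y g) := by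
  simpa only [sub_apply, MultilinearMap.curryLeft_apply] using
    DFunLike.congr_fun (map_sub f.curryLeft x y) g

theorem exists_mem_convexHull_triple_eq_combo {W : Type*} [AddCommGroup W] [Module ℝ W]
    (a b c : W) :
    ∃ χ ∈ convexHull ℝ {a, b, c}, ∀ x ∈ convexHull ℝ {a, b, c}, ∃ y ∈ convexHull ℝ {a, b, c},
      χ = (1 / 3 : ℝ) • x + (2 / 3 : ℝ) • y := by
  set K := convexHull ℝ {a, b, c}
  have hK : Convex ℝ K := convex_convexHull ℝ _
  have ha : a ∈ K := subset_convexHull ℝ _ (by simp)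
  have hb : b ∈ K := subset_convexHull ℝ _ (by simp)
  have hc : c ∈ K := subset_convexHull ℝ _ (by simp)
  set χ := (1 / 3 : ℝ) • a + (2 / 3 : ℝ) • midpoint ℝ b c with hχ
  have hconv : Convex ℝ {x | ∃ y ∈ K, χ = (1 / 3 : ℝ) • x + (2 / 3 : ℝ) • y} := by
    rintro x ⟨x', hx', hx⟩ y ⟨y', hy', hy⟩ s t hs ht hst
    refine ⟨s • x' + t • y', hK hx' hy' hs ht hst, ?_⟩
    calc χ = s • χ + t • χ := (Convex.combo_self hst χ).symm
      _ = s • ((1 / 3 : ℝ) • x + (2 / 3 : ℝ) • x') + t • ((1 / 3 : ℝ) • y + (2 / 3 : ℝ) • y') := by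
          rw [← hx, ← hy]
      _ = (1 / 3 : ℝ) • (s • x + t • y) + (2 / 3 : ℝ) • (s • x' + t • y') := by module
  refine ⟨χ, hK ha (hK.midpoint_mem hb hc) (by norm_num) (by norm_num) (by norm_num),
    fun x hx => convexHull_min ?_ hconv hx⟩
  rintro x (rfl | rfl | rfl)
  · exact ⟨midpoint ℝ b c, hK.midpoint_mem hb hc, hχ⟩
  · exact ⟨midpoint ℝ a c, hK.midpoint_mem ha hc, by
      simp only [hχ, midpoint_eq_smul_add, invOf_eq_inv]; module⟩
  · exact ⟨midpoint ℝ a b, hK.midpoint_mem ha hb, by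
      simp only [hχ, midpoint_eq_smul_add, invOf_eq_inv]; module⟩

/-- A weighted geometric mean of two nonnegative numbers: the value after `p` steps of the iteration
`b ↦ √(b * M)` started at `I`. -/
noncomputable def dyadicMean (I M : ℝ) (p : ℕ) : ℝ :=
  I ^ ((1 : ℝ) / 2 ^ p) * M ^ (1 - (1 : ℝ) / 2 ^ p)

section DyadicMean

variable {I M : ℝ}

theorem dyadicMean_zero : dyadicMean I M 0 = I := by
  simp [dyadicMean]

theorem dyadicMean_nonneg (hI : 0 ≤ I) (hM : 0 ≤ M) (p : ℕ) : 0 ≤ dyadicMean I M p := by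
  unfold dyadicMean
  positivity

theorem dyadicMean_succ_sq (hI : 0 ≤ I) (hM : 0 ≤ M) (p : ℕ) :
    dyadicMean I M (p + 1) ^ 2 = dyadicMean I M p * M := by
  have hp : (1 : ℝ) / 2 ^ p ≤ 1 := div_le_one_of_le₀ (one_le_pow₀ one_le_two) (by positivity)
  have hI_exp : (1 : ℝ) / 2 ^ (p + 1) * (2 : ℕ) = 1 / 2 ^ p := by
    rw [pow_succ]
    field_simp
    norm_num
  have hM_exp : (1 - (1 : ℝ) / 2 ^ (p + 1)) * (2 : ℕ) = (1 - 1 / 2 ^ p) + 1 := by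
    rw [sub_mul, hI_exp]
    norm_num
    ring
  rw [dyadicMean, mul_pow, ← Real.rpow_mul_natCast hI, ← Real.rpow_mul_natCast hM, hI_exp, hM_exp,
    Real.rpow_add_of_nonneg hM (sub_nonneg.2 hp) zero_le_one, Real.rpow_one, dyadicMean, mul_assoc]

theorem le_mul_dyadicMean_succ (hI : 0 ≤ I) (hM : 0 ≤ M) {C b b' : ℝ} {p : ℕ} (hC : 0 ≤ C)
    (hb : b ≤ C * dyadicMean I M p) (hb' : b' ^ 2 ≤ C * M * b) :
    b' ≤ C * dyadicMean I M (p + 1) := by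
  refine le_of_sq_le_sq ?_ (mul_nonneg hC (dyadicMean_nonneg hI hM _))
  calc b' ^ 2 ≤ C * M * b := hb'
    _ ≤ C * M * (C * dyadicMean I M p) := mul_le_mul_of_nonneg_left hb (mul_nonneg hC hM)
    _ = (C * dyadicMean I M (p + 1)) ^ 2 := by
        rw [mul_pow, dyadicMean_succ_sq hI hM]
        ring

end DyadicMean

/-- A multilinear map is symmetric when it is invariant under permuting its arguments. -/
def IsSymmForm {R M N : Type*} [CommSemiring R] [AddCommMonoid M] [AddCommMonoid N] [Module R M]
    [Module R N] {k : ℕ} (f : MultilinearMap R (fun _ : Fin k => M) N) : Prop :=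
  ∀ (v : Fin k → M) (σ : Equiv.Perm (Fin k)), f (v ∘ σ) = f v

section MixVec

variable {W : Type*}

theorem mixVec_zero (φ ψ : W) {k : ℕ} : (mixVec φ ψ 0 : Fin k → W) = fun _ => ψ :=
  funext fun _ => if_neg (Nat.not_lt_zero _)

theorem mixVec_of_le (φ ψ : W) {k j : ℕ} (h : k ≤ j) :
    (mixVec φ ψ j : Fin k → W) = fun _ => φ :=
  funext fun i => if_pos (i.isLt.trans_le h)

theorem mixVec_mem {F : Set W} {φ ψ : W} (hφ : φ ∈ F) (hψ : ψ ∈ F) (j : ℕ) {k : ℕ} (i : Fin k) :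
    mixVec φ ψ j i ∈ F := by
  unfold mixVec
  split_ifs <;> assumption

theorem update_mixVec_self (φ ψ : W) {k : ℕ} (i : Fin k) :
    Function.update (mixVec φ ψ i : Fin k → W) i ψ = mixVec φ ψ i := by
  simp [mixVec]

theorem update_mixVec_succ (φ ψ : W) {k : ℕ} (i : Fin k) :
    Function.update (mixVec φ ψ i : Fin k → W) i φ = mixVec φ ψ (i + 1) := by
  funext j
  obtain rfl | hj := eq_or_ne j i
  · simp [mixVec]
  · grind [mixVec]

theorem removeNth_mixVec (φ ψ : W) {k : ℕ} (i : Fin (k + 1)) :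
    i.removeNth (mixVec φ ψ i : Fin (k + 1) → W) = mixVec φ ψ i := by
  funext j
  simp only [Fin.removeNth, mixVec]
  congr 1
  simp only [Fin.succAbove, Fin.lt_def, eq_iff_iff]
  grind

end MixVec

namespace IsSymmForm

section Semiring

variable {R M N : Type*} [CommSemiring R] [AddCommMonoid M] [AddCommMonoid N] [Module R M]
    [Module R N] {k : ℕ} {f : MultilinearMap R (fun _ : Fin (k + 1) => M) N}

theorem curryLeft (hf : IsSymmForm f) (u : M) : IsSymmForm (f.curryLeft u) := fun v σ => by
  have hcons : Fin.cons u v ∘ Equiv.Perm.decomposeFin.symm (0, σ) =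
      (Fin.cons u (v ∘ σ) : Fin (k + 1) → M) := by
    funext j
    refine Fin.cases ?_ (fun j => ?_) j <;> simp
  simpa [hcons] using hf (Fin.cons u v) (Equiv.Perm.decomposeFin.symm (0, σ))

theorem map_update (hf : IsSymmForm f) (p : Fin (k + 1) → M) (i : Fin (k + 1)) (v : M) :
    f (Function.update p i v) = f (Fin.cons v (i.removeNth p)) := by
  rw [← Fin.insertNth_removeNth, ← Fin.cons_comp_cycleRange, hf]

theorem map_cons_update_comm (hf : IsSymmForm f) (x y : M) (g : Fin k → M) (i : Fin k) :
    f (Fin.cons x (Function.update g i y)) = f (Fin.cons y (Function.update g i x)) := by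
  rw [← hf (Fin.cons y _) (Equiv.swap 0 i.succ)]
  congr 1
  funext j
  refine Fin.cases (by simp) (fun j => ?_) j
  obtain rfl | hj := eq_or_ne j i
  · simp only [Function.comp_apply, Equiv.swap_apply_right, Fin.cons_succ, Fin.cons_zero,
      Function.update_self]
  · simp [Equiv.swap_apply_of_ne_of_ne, hj]

end Semiring

section Ring

variable {R M N : Type*} [CommRing R] [AddCommGroup M] [AddCommGroup N] [Module R M]
    [Module R N] {k : ℕ} {f : MultilinearMap R (fun _ : Fin (k + 1) => M) N}

theorem map_mixVec_succ_sub (hf : IsSymmForm f) (φ ψ : M) {j : ℕ} (hj : j < k + 1) :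
    f (mixVec φ ψ (j + 1)) - f (mixVec φ ψ j) = f (Fin.cons (φ - ψ) (mixVec φ ψ j)) := by
  have h := hf.map_update (mixVec φ ψ j) ⟨j, hj⟩ (φ - ψ)
  rwa [f.map_update_sub, update_mixVec_succ φ ψ ⟨j, hj⟩, update_mixVec_self φ ψ ⟨j, hj⟩,
    removeNth_mixVec φ ψ ⟨j, hj⟩] at h

end Ring

end IsSymmForm

section HodgePairing

variable {m : ℕ} {W : Type*} [AddCommGroup W] [Module ℝ W]

/-- The form `⟨x, y⟩_g = -B(x, y, g₁, …, gₘ)`, with the sign that makes it positive semidefinite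
under the Hodge index inequality. It is kept multilinear in `g`, whose entries are moved one at a
time. -/
noncomputable def hodgeForm (B : MultilinearMap ℝ (fun _ : Fin (m + 2) => W) ℝ) :
    W →ₗ[ℝ] W →ₗ[ℝ] MultilinearMap ℝ (fun _ : Fin m => W) ℝ :=
  LinearMap.mk₂ ℝ (fun x y => -(B.curryLeft x).curryLeft y)
    (fun _ _ _ => by ext; simp [add_comm]) (fun _ _ _ => by ext; simp)
    (fun _ _ _ => by ext; simp [add_comm]) (fun _ _ _ => by ext; simp)

theorem hodgeForm_apply (B : MultilinearMap ℝ (fun _ : Fin (m + 2) => W) ℝ) (x y : W)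
    (g : Fin m → W) : hodgeForm B x y g = -B (Fin.cons x (Fin.cons y g)) :=
  rfl

/-- The Monge–Ampère energy of a form alone, so that no unit element is involved;
`S.energy` is `maEnergy S.B` by definition. -/
noncomputable def maEnergy (B : MultilinearMap ℝ (fun _ : Fin (m + 2) => W) ℝ) (φ ψ : W) : ℝ :=
  ((m : ℝ) + 2)⁻¹ * ∑ j ∈ range (m + 2), B (Fin.cons (φ - ψ) (mixVec φ ψ j))

/-- The functional `I(φ, ψ)` of a form alone; `S.Ifun` is `maI S.B` by definition. -/
noncomputable def maI (B : MultilinearMap ℝ (fun _ : Fin (m + 2) => W) ℝ) (φ ψ : W) : ℝ :=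
  B (Fin.cons (φ - ψ) fun _ => ψ) - B (Fin.cons (φ - ψ) fun _ => φ)

/-- The functional `J_ψ(φ)` of a form alone; as in `MASetup.Jfun`, the reference `ψ` comes first. -/
noncomputable def maJ (B : MultilinearMap ℝ (fun _ : Fin (m + 2) => W) ℝ) (ψ φ : W) : ℝ :=
  B (Fin.cons (φ - ψ) fun _ => ψ) - maEnergy B φ ψ

variable {B : MultilinearMap ℝ (fun _ : Fin (m + 2) => W) ℝ}

namespace IsSymmForm

theorem hodgeForm_comm (hB : IsSymmForm B) (x y : W) (g : Fin m → W) :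
    hodgeForm B x y g = hodgeForm B y x g := by
  simpa [hodgeForm_apply] using hB.map_cons_update_comm x y (Fin.cons y g) 0

theorem hodgeForm_update_comm (hB : IsSymmForm B) (u x y : W) (g : Fin m → W) (i : Fin m) :
    hodgeForm B u x (Function.update g i y) = hodgeForm B u y (Function.update g i x) :=
  congrArg Neg.neg ((hB.curryLeft u).map_cons_update_comm x y g i)

theorem map_cons_mixVec_sub (hB : IsSymmForm B) (u φ ψ : W) {j : ℕ} (hj : j ≤ m + 1) :
    B (Fin.cons u fun _ => ψ) - B (Fin.cons u (mixVec φ ψ j)) =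
      ∑ i ∈ range j, hodgeForm B u (φ - ψ) (mixVec φ ψ i) := by
  rw [← mixVec_zero φ ψ, ← sum_range_sub' fun i => B (Fin.cons u (mixVec φ ψ i))]
  refine sum_congr rfl fun i hi => ?_
  have hstep := (hB.curryLeft u).map_mixVec_succ_sub φ ψ ((mem_range.1 hi).trans_le hj)
  simp only [MultilinearMap.curryLeft_apply] at hstep
  rw [hodgeForm_apply, ← hstep, neg_sub]

theorem maI_eq_sum (hB : IsSymmForm B) (φ ψ : W) :
    maI B φ ψ = ∑ i ∈ range (m + 1), hodgeForm B (φ - ψ) (φ - ψ) (mixVec φ ψ i) := by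
  rw [← hB.map_cons_mixVec_sub _ _ _ le_rfl, mixVec_of_le φ ψ le_rfl, maI]

theorem maEnergy_eq (hB : IsSymmForm B) (φ ψ : W) :
    maEnergy B φ ψ = ((m : ℝ) + 2)⁻¹ * ((B fun _ => φ) - B fun _ => ψ) := by
  have htele : ∑ j ∈ range (m + 2), B (Fin.cons (φ - ψ) (mixVec φ ψ j)) =
      (B fun _ => φ) - B fun _ => ψ := by
    rw [← mixVec_zero φ ψ, ← mixVec_of_le φ ψ le_rfl, ← sum_range_sub fun j => B (mixVec φ ψ j)]
    exact sum_congr rfl fun j hj => (hB.map_mixVec_succ_sub φ ψ (mem_range.1 hj)).symm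
  rw [maEnergy, htele]

theorem maJ_self (hB : IsSymmForm B) (φ : W) : maJ B φ φ = 0 := by
  rw [maJ, hB.maEnergy_eq, map_cons_sub, sub_self, sub_self, mul_zero, sub_self]

theorem maJ_sub_maJ (hB : IsSymmForm B) (r φ ψ : W) :
    (m + 2) * (maJ B r φ - maJ B r ψ) = ∑ j ∈ range (m + 2),
      (B (Fin.cons (φ - ψ) fun _ => r) - B (Fin.cons (φ - ψ) (mixVec φ ψ j))) := by
  have hcocycle : maJ B r φ - maJ B r ψ =
      B (Fin.cons (φ - ψ) fun _ => r) - maEnergy B φ ψ := by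
    simp only [maJ, hB.maEnergy_eq, map_cons_sub]
    ring
  rw [hcocycle, maEnergy, sum_sub_distrib, sum_const, card_range]
  field_simp
  simp

theorem maJ_eq_sum (hB : IsSymmForm B) (φ ψ : W) :
    (m + 2) * maJ B ψ φ = ∑ j ∈ range (m + 2), ∑ i ∈ range j,
      hodgeForm B (φ - ψ) (φ - ψ) (mixVec φ ψ i) := by
  rw [← sub_zero (maJ B ψ φ), ← hB.maJ_self ψ, hB.maJ_sub_maJ]
  exact sum_congr rfl fun j hj =>
    hB.map_cons_mixVec_sub _ _ _ (Nat.lt_succ_iff.1 (mem_range.1 hj))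

end IsSymmForm

/-- Symmetry and the local Hodge index inequality of `B` on `F`, the latter along differences of
elements of `F` only: there is no unit element. -/
structure IsHodgePairing (B : MultilinearMap ℝ (fun _ : Fin (m + 2) => W) ℝ) (F : Set W) :
    Prop where
  symm : IsSymmForm B
  nonpos : ∀ u ∈ vectorSpan ℝ F, ∀ g : Fin m → W, (∀ i, g i ∈ F) →
    B (Fin.cons u (Fin.cons u g)) ≤ 0

namespace IsHodgePairing

variable {F : Set W}

theorem hodgeForm_self_nonneg (hB : IsHodgePairing B F) {u : W} (hu : u ∈ vectorSpan ℝ F)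
    {g : Fin m → W} (hg : ∀ i, g i ∈ F) : 0 ≤ hodgeForm B u u g :=
  neg_nonneg.2 (hB.nonpos u hu g hg)

theorem hodgeForm_sq_le (hB : IsHodgePairing B F) {u v : W} (hu : u ∈ vectorSpan ℝ F)
    (hv : v ∈ vectorSpan ℝ F) {g : Fin m → W} (hg : ∀ i, g i ∈ F) :
    hodgeForm B u v g ^ 2 ≤ hodgeForm B u u g * hodgeForm B v v g := by
  let Q : LinearMap.BilinForm ℝ (vectorSpan ℝ F) :=
    LinearMap.mk₂ ℝ (fun x y => hodgeForm B x y g) (by simp) (by simp) (by simp) (by simp)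
  exact Q.apply_sq_le_of_symm (fun x => hB.hodgeForm_self_nonneg x.2 hg)
    ⟨fun x y => hB.symm.hodgeForm_comm x y g⟩ ⟨u, hu⟩ ⟨v, hv⟩

theorem hodgeForm_sub_self_le (hB : IsHodgePairing B F) {u v : W} (hu : u ∈ vectorSpan ℝ F)
    (hv : v ∈ vectorSpan ℝ F) {g : Fin m → W} (hg : ∀ i, g i ∈ F) :
    hodgeForm B (u - v) (u - v) g ≤ 2 * hodgeForm B u u g + 2 * hodgeForm B v v g := by
  have hsum := hB.hodgeForm_self_nonneg (add_mem hu hv) hg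
  simp only [map_add, map_sub, LinearMap.add_apply, LinearMap.sub_apply,
    add_apply, sub_apply] at hsum ⊢
  linarith

theorem pow_mul_hodgeForm_le (hB : IsHodgePairing B F) {u : W} (hu : u ∈ vectorSpan ℝ F) {t : ℝ}
    (ht : 0 ≤ t) {g h : Fin m → W} (hg : ∀ i, g i ∈ F) (hh : ∀ i, h i ∈ F)
    (hgh : ∀ i, ∃ c : ℝ, 0 ≤ c ∧ ∃ y ∈ F, h i = t • g i + c • y) :
    t ^ m * hodgeForm B u u g ≤ hodgeForm B u u h := by
  simpa using pow_card_mul_map_le_map (F := fun _ => F) (hodgeForm B u u)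
    (fun _ => hB.hodgeForm_self_nonneg hu) ht hg hh hgh

theorem hodgeForm_mixVec_nonneg (hB : IsHodgePairing B F) {φ ψ : W} (hφ : φ ∈ F) (hψ : ψ ∈ F)
    (i : ℕ) : 0 ≤ hodgeForm B (φ - ψ) (φ - ψ) (mixVec φ ψ i) :=
  hB.hodgeForm_self_nonneg (vsub_mem_vectorSpan ℝ hφ hψ) (mixVec_mem hφ hψ i)

theorem maI_nonneg (hB : IsHodgePairing B F) {φ ψ : W} (hφ : φ ∈ F) (hψ : ψ ∈ F) :
    0 ≤ maI B φ ψ := by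
  rw [hB.symm.maI_eq_sum]
  exact sum_nonneg fun i _ => hB.hodgeForm_mixVec_nonneg hφ hψ i

theorem maJ_nonneg (hB : IsHodgePairing B F) {φ ψ : W} (hφ : φ ∈ F) (hψ : ψ ∈ F) :
    0 ≤ maJ B ψ φ := by
  refine (mul_nonneg_iff_of_pos_left (c := (m : ℝ) + 2) (by positivity)).1 ?_
  rw [hB.symm.maJ_eq_sum]
  exact sum_nonneg fun j _ => sum_nonneg fun i _ => hB.hodgeForm_mixVec_nonneg hφ hψ i

theorem maI_le_maJ (hB : IsHodgePairing B F) {φ ψ : W} (hφ : φ ∈ F) (hψ : ψ ∈ F) :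
    maI B φ ψ ≤ (m + 2) * maJ B ψ φ := by
  rw [hB.symm.maI_eq_sum, hB.symm.maJ_eq_sum]
  exact single_le_sum (f := fun j => ∑ i ∈ range j, hodgeForm B (φ - ψ) (φ - ψ) (mixVec φ ψ i))
    (fun j _ => sum_nonneg fun i _ => hB.hodgeForm_mixVec_nonneg hφ hψ i) (self_mem_range_succ _)

theorem maJ_le_maI (hB : IsHodgePairing B F) {φ ψ : W} (hφ : φ ∈ F) (hψ : ψ ∈ F) :
    maJ B ψ φ ≤ maI B φ ψ := by
  refine le_of_mul_le_mul_left (a := (m : ℝ) + 2) ?_ (by positivity)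
  calc (m + 2) * maJ B ψ φ
      = ∑ j ∈ range (m + 2), ∑ i ∈ range j, hodgeForm B (φ - ψ) (φ - ψ) (mixVec φ ψ i) :=
        hB.symm.maJ_eq_sum φ ψ
    _ ≤ ∑ _j ∈ range (m + 2), maI B φ ψ := by
        rw [hB.symm.maI_eq_sum]
        exact sum_le_sum fun j hj => sum_le_sum_of_subset_of_nonneg
          (range_subset_range.2 (Nat.lt_succ_iff.1 (mem_range.1 hj)))
          fun i _ _ => hB.hodgeForm_mixVec_nonneg hφ hψ i
    _ = (m + 2) * maI B φ ψ := by simp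

theorem hodgeForm_const_le_maJ (hB : IsHodgePairing B F) {φ ψ : W} (hφ : φ ∈ F) (hψ : ψ ∈ F) :
    hodgeForm B (φ - ψ) (φ - ψ) (fun _ => φ) ≤ (m + 2) * maJ B ψ φ := by
  refine le_trans ?_ (hB.maI_le_maJ hφ hψ)
  rw [hB.symm.maI_eq_sum, ← mixVec_of_le φ ψ le_rfl]
  exact single_le_sum (f := fun i => hodgeForm B (φ - ψ) (φ - ψ) (mixVec φ ψ i))
    (fun i _ => hB.hodgeForm_mixVec_nonneg hφ hψ i) (self_mem_range_succ _)

theorem convexOn_maJ (hB : IsHodgePairing B F) (hF : Convex ℝ F) (r : W) :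
    ConvexOn ℝ F (maJ B r) := by
  refine ⟨hF, fun φ hφ ψ hψ a b ha hb hab => ?_⟩
  obtain rfl : b = 1 - a := eq_sub_iff_add_eq'.2 hab
  set ω := a • φ + (1 - a) • ψ with hω
  have hωF : ω ∈ F := hF hφ hψ ha hb hab
  have hlin (s : W) : B (Fin.cons (ω - s) fun _ => s) =
      a * B (Fin.cons (φ - s) fun _ => s) + (1 - a) * B (Fin.cons (ψ - s) fun _ => s) := by
    have hsub : ω - s = a • (φ - s) + (1 - a) • (ψ - s) := by
      rw [hω]
      module
    rw [hsub, B.cons_add, B.cons_smul, B.cons_smul, smul_eq_mul, smul_eq_mul]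
  have hdefect : a * maJ B r φ + (1 - a) * maJ B r ψ - maJ B r ω =
      a * maJ B ω φ + (1 - a) * maJ B ω ψ - maJ B ω ω := by
    simp only [maJ, hB.symm.maEnergy_eq, hlin]
    ring
  rw [hB.symm.maJ_self] at hdefect
  have hφω := mul_nonneg ha (hB.maJ_nonneg hφ hωF)
  have hψω := mul_nonneg hb (hB.maJ_nonneg hψ hωF)
  simp only [smul_eq_mul]
  linarith

theorem mono (hB : IsHodgePairing B F) {K : Set W} (hK : K ⊆ F) : IsHodgePairing B K where
  symm := hB.symm
  nonpos u hu g hg := hB.nonpos u (vectorSpan_mono ℝ hK hu) g fun i => hK (hg i)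

theorem hodgeForm_midpoint_sub_le (hB : IsHodgePairing B F) (hF : Convex ℝ F) {r χ x : W}
    (hr : r ∈ F) (hχ : χ ∈ F) (hx : x ∈ F) :
    hodgeForm B (midpoint ℝ χ x - r) (midpoint ℝ χ x - r) (fun _ => χ) ≤
      (m + 2) * 2 ^ m * maJ B r (midpoint ℝ χ x) := by
  have hω := hF.midpoint_mem hχ hx
  set ω := midpoint ℝ χ x with hω_def
  have hdom := hB.pow_mul_hodgeForm_le (vsub_mem_vectorSpan ℝ hω hr) (t := 1 / 2) (by norm_num)
    (fun _ : Fin m => hχ) (fun _ => hω) fun _ => ⟨1 / 2, by norm_num, x, hx, by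
      simp only [hω_def, midpoint_eq_smul_add, invOf_eq_inv, one_div, smul_add]⟩
  calc hodgeForm B (ω - r) (ω - r) (fun _ => χ)
      = 2 ^ m * ((1 / 2) ^ m * hodgeForm B (ω - r) (ω - r) (fun _ => χ)) := by
        rw [← mul_assoc, ← mul_pow]; norm_num
    _ ≤ 2 ^ m * ((m + 2) * maJ B r ω) :=
        mul_le_mul_of_nonneg_left (hdom.trans (hB.hodgeForm_const_le_maJ hω hr)) (by positivity)
    _ = (m + 2) * 2 ^ m * maJ B r ω := by ring

theorem hodgeForm_const_sub_le (hB : IsHodgePairing B F) (hF : Convex ℝ F) {r χ x y : W} {M : ℝ}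
    (hr : r ∈ F) (hM : ∀ x ∈ F, maJ B r x ≤ M) (hχ : χ ∈ F) (hx : x ∈ F) (hy : y ∈ F) :
    hodgeForm B (x - y) (x - y) (fun _ => χ) ≤ 40 * (m + 2) * 2 ^ m * M := by
  have hspan {z w : W} (hz : z ∈ F) (hw : w ∈ F) : z - w ∈ vectorSpan ℝ F :=
    vsub_mem_vectorSpan ℝ hz hw
  have hmid {z : W} (hz : z ∈ F) :
      hodgeForm B (midpoint ℝ χ z - r) (midpoint ℝ χ z - r) (fun _ => χ) ≤
        (m + 2) * 2 ^ m * M :=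
    (hB.hodgeForm_midpoint_sub_le hF hr hχ hz).trans <|
      mul_le_mul_of_nonneg_left (hM _ (hF.midpoint_mem hχ hz)) (by positivity)
  have href {z : W} (hz : z ∈ F) :
      hodgeForm B (z - r) (z - r) (fun _ => χ) ≤ 10 * ((m + 2) * 2 ^ m * M) := by
    have hsplit : z - r = (2 : ℝ) • (midpoint ℝ χ z - r) - (midpoint ℝ χ χ - r) := by
      simp only [midpoint_eq_smul_add, invOf_eq_inv]
      module
    have hle := hB.hodgeForm_sub_self_le
      (Submodule.smul_mem _ (2 : ℝ) (hspan (hF.midpoint_mem hχ hz) hr))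
      (hspan (hF.midpoint_mem hχ hχ) hr) fun _ : Fin m => hχ
    rw [← hsplit] at hle
    simp only [map_smul, LinearMap.smul_apply, smul_apply, smul_eq_mul] at hle
    linarith [hmid hz, hmid hχ]
  have hle := hB.hodgeForm_sub_self_le (hspan hx hr) (hspan hy hr) fun _ : Fin m => hχ
  rw [sub_sub_sub_cancel_right] at hle
  linarith [href hx, href hy]

theorem hodgeForm_sub_le (hB : IsHodgePairing B F) (hF : Convex ℝ F) {φ ψ r : W} {M : ℝ}
    (hφ : φ ∈ F) (hψ : ψ ∈ F) (hr : r ∈ F) (hMφ : maJ B r φ ≤ M) (hMψ : maJ B r ψ ≤ M)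
    {x y : W} (hx : x ∈ convexHull ℝ {φ, ψ, r}) (hy : y ∈ convexHull ℝ {φ, ψ, r})
    {g : Fin m → W} (hg : ∀ i, g i ∈ convexHull ℝ {φ, ψ, r}) :
    hodgeForm B (x - y) (x - y) g ≤ 40 * (m + 2) * 6 ^ m * M := by
  set K := convexHull ℝ {φ, ψ, r}
  have hKF : K ⊆ F := convexHull_min (by simp [Set.insert_subset_iff, *]) hF
  have hBK : IsHodgePairing B K := hB.mono hKF
  have hK : Convex ℝ K := convex_convexHull ℝ _
  have hrK : r ∈ K := subset_convexHull ℝ _ (by simp)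
  have hM : ∀ x ∈ K, maJ B r x ≤ M := by
    have hMr : maJ B r r ≤ M := hB.symm.maJ_self r ▸ (hB.maJ_nonneg hφ hr).trans hMφ
    have hsub : K ⊆ {x ∈ F | maJ B r x ≤ M} :=
      convexHull_min (by simp [Set.insert_subset_iff, *]) ((hB.convexOn_maJ hF r).convex_le M)
    exact fun x hx => (hsub hx).2
  obtain ⟨χ, hχ, hdom⟩ := exists_mem_convexHull_triple_eq_combo φ ψ r
  have hgχ := hBK.pow_mul_hodgeForm_le (vsub_mem_vectorSpan ℝ hx hy) (t := 1 / 3) (by norm_num)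
    hg (fun _ => hχ) fun i => ⟨2 / 3, by norm_num, hdom (g i) (hg i)⟩
  calc hodgeForm B (x - y) (x - y) g
      = 3 ^ m * ((1 / 3) ^ m * hodgeForm B (x - y) (x - y) g) := by
        rw [← mul_assoc, ← mul_pow]; norm_num
    _ ≤ 3 ^ m * (40 * (m + 2) * 2 ^ m * M) := mul_le_mul_of_nonneg_left
        (hgχ.trans <| hBK.hodgeForm_const_sub_le hK hrK hM hχ hx hy) (by positivity)
    _ = 40 * (m + 2) * 6 ^ m * M := by
        rw [show (6 : ℝ) = 3 * 2 by norm_num, mul_pow]; ring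

theorem hodgeForm_update_sub_sq_le (hB : IsHodgePairing B F) (hF : Convex ℝ F) {φ ψ x : W}
    {N : ℝ} (hφ : φ ∈ F) (hψ : ψ ∈ F) (hx : x ∈ F) {g : Fin m → W} (hg : ∀ i, g i ∈ F)
    (hN : ∀ x ∈ F, ∀ y ∈ F, ∀ g : Fin m → W, (∀ i, g i ∈ F) →
      hodgeForm B (x - y) (x - y) g ≤ N) (i : Fin m) :
    (hodgeForm B (φ - ψ) (φ - ψ) (Function.update g i x) -
        hodgeForm B (φ - ψ) (φ - ψ) (Function.update g i (midpoint ℝ φ ψ))) ^ 2 ≤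
      4 * N * hodgeForm B (φ - ψ) (φ - ψ) (Function.update g i (midpoint ℝ φ ψ)) := by
  set u := φ - ψ
  set τ := midpoint ℝ φ ψ with hτ
  have hu : u ∈ vectorSpan ℝ F := vsub_mem_vectorSpan ℝ hφ hψ
  have hτF : τ ∈ F := hF.midpoint_mem hφ hψ
  have hincr : hodgeForm B u u (Function.update g i x) - hodgeForm B u u (Function.update g i τ) =
      hodgeForm B u (x - τ) (Function.update g i φ) -
        hodgeForm B u (x - τ) (Function.update g i ψ) := by
    rw [← MultilinearMap.map_update_sub, hB.symm.hodgeForm_update_comm,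
      ← MultilinearMap.map_update_sub]
  have hcs {z : W} (hz : z ∈ F) : hodgeForm B u (x - τ) (Function.update g i z) ^ 2 ≤
      hodgeForm B u u (Function.update g i z) * N := by
    have hupd : ∀ j, Function.update g i z j ∈ F :=
      (Function.forall_update_iff g fun _ w => w ∈ F).2 ⟨hz, fun j _ => hg j⟩
    exact (hB.hodgeForm_sq_le hu (vsub_mem_vectorSpan ℝ hx hτF) hupd).trans <|
      mul_le_mul_of_nonneg_left (hN _ hx _ hτF _ hupd) (hB.hodgeForm_self_nonneg hu hupd)
  have havg : hodgeForm B u u (Function.update g i φ) + hodgeForm B u u (Function.update g i ψ) =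
      2 * hodgeForm B u u (Function.update g i τ) := by
    rw [hτ, midpoint_eq_smul_add, MultilinearMap.map_update_smul, MultilinearMap.map_update_add,
      smul_eq_mul, invOf_eq_inv, mul_inv_cancel_left₀ two_ne_zero]
  have hsub_sq (X Y : ℝ) : (X - Y) ^ 2 ≤ 2 * (X ^ 2 + Y ^ 2) := by linarith [sq_nonneg (X + Y)]
  rw [hincr]
  calc (hodgeForm B u (x - τ) (Function.update g i φ) -
        hodgeForm B u (x - τ) (Function.update g i ψ)) ^ 2
      ≤ 2 * (hodgeForm B u (x - τ) (Function.update g i φ) ^ 2 +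
          hodgeForm B u (x - τ) (Function.update g i ψ) ^ 2) := hsub_sq _ _
    _ ≤ 2 * (hodgeForm B u u (Function.update g i φ) * N +
          hodgeForm B u u (Function.update g i ψ) * N) := by gcongr <;> exact hcs ‹_›
    _ = 4 * N * hodgeForm B u u (Function.update g i τ) := by rw [← add_mul, havg]; ring

theorem hodgeForm_update_sq_le (hB : IsHodgePairing B F) (hF : Convex ℝ F) {φ ψ x : W} {N : ℝ}
    (hφ : φ ∈ F) (hψ : ψ ∈ F) (hx : x ∈ F) {g : Fin m → W} (hg : ∀ i, g i ∈ F)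
    (hN : ∀ x ∈ F, ∀ y ∈ F, ∀ g : Fin m → W, (∀ i, g i ∈ F) →
      hodgeForm B (x - y) (x - y) g ≤ N) (i : Fin m) :
    hodgeForm B (φ - ψ) (φ - ψ) (Function.update g i x) ^ 2 ≤
      9 * N * hodgeForm B (φ - ψ) (φ - ψ) (Function.update g i (midpoint ℝ φ ψ)) := by
  have hupd : ∀ j, Function.update g i (midpoint ℝ φ ψ) j ∈ F :=
    (Function.forall_update_iff g fun _ w => w ∈ F).2 ⟨hF.midpoint_mem hφ hψ, fun j _ => hg j⟩
  have hincr := hB.hodgeForm_update_sub_sq_le hF hφ hψ hx hg hN i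
  have hnonneg := hB.hodgeForm_self_nonneg (vsub_mem_vectorSpan ℝ hφ hψ) hupd
  have hle := hN φ hφ ψ hψ _ hupd
  simp only [vsub_eq_sub] at hnonneg
  set b := hodgeForm B (φ - ψ) (φ - ψ) (Function.update g i (midpoint ℝ φ ψ))
  set b' := hodgeForm B (φ - ψ) (φ - ψ) (Function.update g i x)
  calc b' ^ 2 ≤ 3 * b ^ 2 + 3 / 2 * (b' - b) ^ 2 := by linarith [sq_nonneg (b' - 3 * b)]
    _ ≤ 3 * (N * b) + 3 / 2 * (4 * N * b) := by
        gcongr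
        exact (sq b).trans_le (mul_le_mul_of_nonneg_right hle hnonneg)
    _ = 9 * N * b := by ring

theorem hodgeForm_le_mul_dyadicMean (hB : IsHodgePairing B F) (hF : Convex ℝ F) {φ ψ : W}
    {C I M : ℝ} (hC : 0 ≤ C) (hI : 0 ≤ I) (hM : 0 ≤ M) (hφ : φ ∈ F) (hψ : ψ ∈ F)
    (hN : ∀ x ∈ F, ∀ y ∈ F, ∀ g : Fin m → W, (∀ i, g i ∈ F) →
      hodgeForm B (x - y) (x - y) g ≤ C * M)
    (hmid : hodgeForm B (φ - ψ) (φ - ψ) (fun _ => midpoint ℝ φ ψ) ≤ C * I)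
    {g : Fin m → W} (hg : ∀ i, g i ∈ F) :
    hodgeForm B (φ - ψ) (φ - ψ) g ≤ 9 * C * dyadicMean I M m := by
  set τ := midpoint ℝ φ ψ
  suffices key : ∀ s : Finset (Fin m), hodgeForm B (φ - ψ) (φ - ψ) (s.piecewise g fun _ => τ) ≤
      9 * C * dyadicMean I M #s by
    simpa using key univ
  intro s
  induction s using Finset.induction_on with
  | empty =>
    rw [piecewise_empty, card_empty, dyadicMean_zero]
    linarith [mul_nonneg hC hI]
  | insert i s hi ih =>
    have hmem : ∀ j, s.piecewise g (fun _ => τ) j ∈ F := fun j =>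
      s.piecewise_cases g _ (· ∈ F) (hg j) (hF.midpoint_mem hφ hψ)
    have hstep := hB.hodgeForm_update_sq_le hF hφ hψ (hg i) hmem hN i
    have hself : Function.update (s.piecewise g fun _ => τ) i τ = s.piecewise g fun _ => τ := by
      simp [hi]
    rw [← piecewise_insert, hself, ← mul_assoc] at hstep
    rw [card_insert_of_notMem hi]
    exact le_mul_dyadicMean_succ hI hM (by positivity) ih hstep

theorem abs_hodgeForm_le_mul_dyadicMean (hB : IsHodgePairing B F) (hF : Convex ℝ F) {φ ψ r : W}
    {M : ℝ} (hφ : φ ∈ F) (hψ : ψ ∈ F) (hr : r ∈ F) (hMφ : maJ B r φ ≤ M) (hMψ : maJ B r ψ ≤ M)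
    {x y : W} (hx : x ∈ convexHull ℝ {φ, ψ, r}) (hy : y ∈ convexHull ℝ {φ, ψ, r})
    {g : Fin m → W} (hg : ∀ i, g i ∈ convexHull ℝ {φ, ψ, r}) :
    |hodgeForm B (φ - ψ) (x - y) g| ≤
      9 * (40 * (m + 2) * 6 ^ m) * dyadicMean (maI B φ ψ) M (m + 1) := by
  set K := convexHull ℝ {φ, ψ, r}
  set C : ℝ := 40 * (m + 2) * 6 ^ m
  have hC : 0 ≤ C := by positivity
  have hI : 0 ≤ maI B φ ψ := hB.maI_nonneg hφ hψ
  have hM : 0 ≤ M := (hB.maJ_nonneg hφ hr).trans hMφ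
  have hBK : IsHodgePairing B K :=
    hB.mono (convexHull_min (by simp [Set.insert_subset_iff, *]) hF)
  have hφK : φ ∈ K := subset_convexHull ℝ _ (by simp)
  have hψK : ψ ∈ K := subset_convexHull ℝ _ (by simp)
  have hN : ∀ x ∈ K, ∀ y ∈ K, ∀ g : Fin m → W, (∀ i, g i ∈ K) →
      hodgeForm B (x - y) (x - y) g ≤ C * M :=
    fun x hx y hy g hg => hB.hodgeForm_sub_le hF hφ hψ hr hMφ hMψ hx hy hg
  have hmid : hodgeForm B (φ - ψ) (φ - ψ) (fun _ => midpoint ℝ φ ψ) ≤ C * maI B φ ψ := by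
    have hseg : ∀ z ∈ ({φ, ψ} : Set W), z ∈ convexHull ℝ {φ, ψ, ψ} := fun z hz =>
      subset_convexHull ℝ _ (by simpa using hz)
    exact hB.hodgeForm_sub_le hF hφ hψ hψ (hB.maJ_le_maI hφ hψ)
      ((hB.symm.maJ_self ψ).trans_le hI) (hseg φ (by simp)) (hseg ψ (by simp)) fun _ =>
        (convex_convexHull ℝ _).midpoint_mem (hseg φ (by simp)) (hseg ψ (by simp))
  have hself := hBK.hodgeForm_le_mul_dyadicMean (convex_convexHull ℝ _) hC hI hM hφK hψK hN hmid hg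
  refine le_mul_dyadicMean_succ hI hM (by positivity) hself ?_
  have hself_nonneg : 0 ≤ hodgeForm B (φ - ψ) (φ - ψ) g :=
    hBK.hodgeForm_self_nonneg (vsub_mem_vectorSpan ℝ hφK hψK) hg
  calc |hodgeForm B (φ - ψ) (x - y) g| ^ 2
      ≤ hodgeForm B (φ - ψ) (φ - ψ) g * hodgeForm B (x - y) (x - y) g := by
        rw [sq_abs]
        exact hBK.hodgeForm_sq_le (vsub_mem_vectorSpan ℝ hφK hψK) (vsub_mem_vectorSpan ℝ hx hy) hg
    _ ≤ hodgeForm B (φ - ψ) (φ - ψ) g * (C * M) :=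
        mul_le_mul_of_nonneg_left (hN x hx y hy g hg) hself_nonneg
    _ ≤ 9 * C * M * hodgeForm B (φ - ψ) (φ - ψ) g := by
        linarith [mul_nonneg hself_nonneg (mul_nonneg hC hM)]

end IsHodgePairing

namespace IsSymmForm

variable {K : Set W} {φ ψ r : W} {D : ℝ}

theorem abs_map_cons_sub_le (hB : IsSymmForm B) {v : W} {g h : Fin (m + 1) → W}
    (hg : ∀ i, g i ∈ K) (hh : ∀ i, h i ∈ K)
    (hD : ∀ i, ∀ p : Fin m → W, (∀ j, p j ∈ K) → |hodgeForm B v (h i - g i) p| ≤ D) :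
    |B (Fin.cons v h) - B (Fin.cons v g)| ≤ (m + 1) * D := by
  have htele := abs_map_sub_map_le_card_mul (B.curryLeft v) (g := g) (h := h) (D := D) fun s i => by
    rw [(hB.curryLeft v).map_update, ← abs_neg]
    exact hD i _ fun j => s.piecewise_cases h g (· ∈ K) (hh _) (hg _)
  simpa using htele

theorem abs_maI_sub_maI_le (hB : IsSymmForm B) (hφ : φ ∈ K) (hψ : ψ ∈ K) (hr : r ∈ K)
    (hD : ∀ x ∈ K, ∀ y ∈ K, ∀ g : Fin m → W, (∀ i, g i ∈ K) →
      |hodgeForm B (φ - ψ) (x - y) g| ≤ D) :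
    |maI B φ r - maI B ψ r| ≤ 2 * (m + 1) * D := by
  have hsplit : maI B φ r - maI B ψ r =
      (B (Fin.cons (φ - ψ) fun _ => r) - B (Fin.cons (φ - ψ) fun _ => φ)) -
        (B (Fin.cons (ψ - r) fun _ => φ) - B (Fin.cons (ψ - r) fun _ => ψ)) := by
    simp only [maI, map_cons_sub]
    ring
  have hfst := hB.abs_map_cons_sub_le (v := φ - ψ) (fun _ => hφ) (fun _ => hr) fun _ =>
    hD r hr φ hφ
  have hsnd := hB.abs_map_cons_sub_le (v := ψ - r) (fun _ => hψ) (fun _ => hφ) fun _ p hp =>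
    hB.hodgeForm_comm (ψ - r) (φ - ψ) p ▸ hD ψ hψ r hr p hp
  rw [hsplit]
  linarith [abs_sub (B (Fin.cons (φ - ψ) fun _ => r) - B (Fin.cons (φ - ψ) fun _ => φ))
    (B (Fin.cons (ψ - r) fun _ => φ) - B (Fin.cons (ψ - r) fun _ => ψ))]

theorem abs_maJ_sub_maJ_le (hB : IsSymmForm B) (hφ : φ ∈ K) (hψ : ψ ∈ K) (hr : r ∈ K)
    (hD : ∀ x ∈ K, ∀ y ∈ K, ∀ g : Fin m → W, (∀ i, g i ∈ K) →
      |hodgeForm B (φ - ψ) (x - y) g| ≤ D) :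
    |maJ B r φ - maJ B r ψ| ≤ (m + 1) * D := by
  have hm : (0 : ℝ) < m + 2 := by positivity
  refine le_of_mul_le_mul_left (a := (m : ℝ) + 2) ?_ hm
  calc (m + 2) * |maJ B r φ - maJ B r ψ|
      = |∑ j ∈ range (m + 2),
          (B (Fin.cons (φ - ψ) fun _ => r) - B (Fin.cons (φ - ψ) (mixVec φ ψ j)))| := by
        rw [← hB.maJ_sub_maJ, abs_mul, abs_of_pos hm]
    _ ≤ ∑ _j ∈ range (m + 2), (m + 1) * D :=
        (abs_sum_le_sum_abs _ _).trans <| sum_le_sum fun j _ =>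
          hB.abs_map_cons_sub_le (mixVec_mem hφ hψ j) (fun _ => hr) fun i =>
            hD r hr _ (mixVec_mem hφ hψ j i)
    _ = (m + 2) * ((m + 1) * D) := by simp

end IsSymmForm

theorem IJ_holder_continuity_general {F : Set W} (hB : IsHodgePairing B F) (hF : Convex ℝ F)
    {φ ψ r : W} (hr : r ∈ F) (hφ : φ ∈ F) (hψ : ψ ∈ F) :
    max |maI B φ r - maI B ψ r| |maJ B r φ - maJ B r ψ| ≤
      720 * (m + 1) * (m + 2) * 6 ^ m * maI B φ ψ ^ ((1 : ℝ) / 2 ^ (m + 1)) *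
        max (maJ B r φ) (maJ B r ψ) ^ (1 - (1 : ℝ) / 2 ^ (m + 1)) := by
  set M := max (maJ B r φ) (maJ B r ψ)
  set K := convexHull ℝ {φ, ψ, r}
  set D := 9 * (40 * ((m : ℝ) + 2) * 6 ^ m) * dyadicMean (maI B φ ψ) M (m + 1) with hD_def
  have hφK : φ ∈ K := subset_convexHull ℝ _ (by simp)
  have hψK : ψ ∈ K := subset_convexHull ℝ _ (by simp)
  have hrK : r ∈ K := subset_convexHull ℝ _ (by simp)
  have hD : ∀ x ∈ K, ∀ y ∈ K, ∀ g : Fin m → W, (∀ i, g i ∈ K) →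
      |hodgeForm B (φ - ψ) (x - y) g| ≤ D := fun x hx y hy g hg =>
    hB.abs_hodgeForm_le_mul_dyadicMean hF hφ hψ hr (le_max_left _ _) (le_max_right _ _) hx hy hg
  have hmI := hB.symm.abs_maI_sub_maI_le hφK hψK hrK hD
  have hmJ := hB.symm.abs_maJ_sub_maJ_le hφK hψK hrK hD
  calc max |maI B φ r - maI B ψ r| |maJ B r φ - maJ B r ψ|
      ≤ 2 * (m + 1) * D := max_le hmI (by linarith [(abs_nonneg _).trans hmJ])
    _ = _ := by rw [hD_def, dyadicMean]; ring

theorem MASetup.isHodgePairing (S : MASetup m W) : IsHodgePairing S.B S.F where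
  symm := S.symm
  nonpos u hu := S.hodge u <| Submodule.span_mono (by
    rintro _ ⟨φ, hφ, ψ, hψ, rfl⟩
    exact .inl ⟨φ, hφ, ψ, hψ, rfl⟩) hu

end HodgePairing

/-- there is `C > 0` depending only on `n = m + 1` such that for
every setup, reference `φ_ref ∈ F`, and all `φ, ψ ∈ F`:
`max{|I(φ) - I(ψ)|, |J(φ) - J(ψ)|} ≤ C I(φ,ψ)^{1/2ⁿ} (max{J(φ), J(ψ)})^{1-1/2ⁿ}`,
where `I(φ) = I(φ, φ_ref)` and `J(φ) = J_{φ_ref}(φ)`. -/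
theorem IJ_holder_continuity (m : ℕ) :
    ∃ C : ℝ, 0 < C ∧
      ∀ (W : Type*) [AddCommGroup W] [Module ℝ W] (S : MASetup m W),
        ∀ φref ∈ S.F, ∀ φ ∈ S.F, ∀ ψ ∈ S.F,
          max |S.Ifun φ φref - S.Ifun ψ φref| |S.Jfun φref φ - S.Jfun φref ψ| ≤
            C * S.Ifun φ ψ ^ ((1 : ℝ) / 2 ^ (m + 1)) *
              (max (S.Jfun φref φ) (S.Jfun φref ψ)) ^ (1 - (1 : ℝ) / 2 ^ (m + 1)) :=
  ⟨720 * (m + 1) * (m + 2) * 6 ^ m, by positivity, fun W _ _ S r hr φ hφ ψ hψ =>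
    IJ_holder_continuity_general S.isHodgePairing S.Fconv hr hφ hψ⟩
end

section
/- There exists a constant C > 0 depending only on n such that, for every abstract Monge–Ampère pairing setup (W, B, 𝟙, F) as in the context together with a positivity cone W₊ and a constant D ≥ 0 as in the context, and all φ₀, φ₁, …, φₙ ∈ F satisfying φ_ref − φᵢ ∈ W₊ for every 0 ≤ i ≤ n (sup-normalization): B(φ₀ − φ_ref, φ₁, …, φₙ) ≥ B(φ₀ − φ_ref, φ_ref, …, φ_ref) − C·(D + max_{0≤i≤n} J(φᵢ)). -/
open Finset

/-!
Averaging reduces the mixed quantity to a pure one. If `ψ` is the mean of `φ₀, …, φₙ`, then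
expanding `B(r - ψ, ψ, …, ψ)` multilinearly gives nonnegative terms, one of which is
`(n+1)^{-(n+1)} B(r - φ₀, φ₁, …, φₙ)`. For a single potential, the Hodge inequality makes
`B(φ - ψ, φ, …, φ, ψ, …, ψ)` decrease as copies of `φ` replace copies of `ψ`; this yields both
`I ≤ (n+1) J` and the concavity of the energy, hence the convexity of `J`, so that `J` at the mean
is controlled by the `J(φᵢ)`.
-/

namespace MongeAmpere

open MASetup

section MixVec

variable {W : Type*} (φ ψ : W) {k : ℕ}

lemma mixVec_zero : (mixVec φ ψ 0 : Fin k → W) = fun _ => ψ := by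
  funext i
  simp [mixVec]

lemma mixVec_of_le {j : ℕ} (hj : k ≤ j) : (mixVec φ ψ j : Fin k → W) = fun _ => φ := by
  funext i
  exact if_pos (i.isLt.trans_le hj)

lemma mixVec_mem {F : Set W} {φ ψ : W} (hφ : φ ∈ F) (hψ : ψ ∈ F) (j : ℕ) (i : Fin k) :
    mixVec φ ψ j i ∈ F :=
  ite_mem.2 ⟨fun _ => hφ, fun _ => hψ⟩

lemma mixVec_eq_insertNth (p : Fin (k + 1)) :
    (mixVec φ ψ p : Fin (k + 1) → W) = p.insertNth ψ (mixVec φ ψ p : Fin k → W) := by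
  refine Fin.eq_insertNth_iff.2 ⟨if_neg (lt_irrefl _), funext fun i => ?_⟩
  have hlt : (p.succAbove i : ℕ) < p ↔ (i : ℕ) < p := Fin.succAbove_lt_iff_castSucc_lt p i
  simp only [Fin.removeNth, mixVec, hlt]

lemma mixVec_succ_eq_insertNth (p : Fin (k + 1)) :
    (mixVec φ ψ (p + 1) : Fin (k + 1) → W) = p.insertNth φ (mixVec φ ψ p : Fin k → W) := by
  refine Fin.eq_insertNth_iff.2 ⟨if_pos (Nat.lt_succ_self _), funext fun i => ?_⟩
  have hlt : (p.succAbove i : ℕ) < p ↔ (i : ℕ) < p := Fin.succAbove_lt_iff_castSucc_lt p i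
  have hne : (p.succAbove i : ℕ) ≠ p := Fin.val_ne_of_ne (Fin.succAbove_ne p i)
  simp only [Fin.removeNth, mixVec, Nat.lt_succ_iff_lt_or_eq, hlt, hne, or_false]

end MixVec

section Multilinear

variable {R W N : Type*} [CommRing R] [AddCommGroup W] [Module R W] [AddCommGroup N] [Module R N]
  {n : ℕ} (B : MultilinearMap R (fun _ : Fin (n + 1) => W) N)

/-- The linear map `x ↦ B(x, g₁, …, gₙ)`. -/
def firstSlot (g : Fin n → W) : W →ₗ[R] N := B.toLinearMap (Fin.cons 0 g) 0

@[simp]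
lemma firstSlot_apply (g : Fin n → W) (x : W) : firstSlot B g x = B (Fin.cons x g) := by
  simp [firstSlot, Fin.update_cons_zero]

lemma map_cons_sub (g : Fin n → W) (x y : W) :
    B (Fin.cons (x - y) g) = B (Fin.cons x g) - B (Fin.cons y g) := by
  simpa using map_sub (firstSlot B g) x y

lemma map_cons_sub_rev (g : Fin n → W) (x y : W) :
    B (Fin.cons (x - y) g) = -B (Fin.cons (y - x) g) := by
  rw [map_cons_sub, map_cons_sub, neg_sub]

lemma map_cons_smul_const (c : R) (x y : W) :
    B (Fin.cons (c • x) fun _ => c • y) = c ^ (n + 1) • B (Fin.cons x fun _ => y) := by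
  have h : (Fin.cons (c • x) fun _ => c • y : Fin (n + 1) → W) =
      fun i => c • (Fin.cons x fun _ => y : Fin (n + 1) → W) i := by
    funext i
    cases i using Fin.cases <;> rfl
  rw [h, B.map_smul_univ (fun _ => c), prod_const, card_univ, Fintype.card_fin]

lemma map_insertNth_eq_map_cons {B : MultilinearMap R (fun _ : Fin (n + 1) => W) N}
    (hB : ∀ v (σ : Equiv.Perm (Fin (n + 1))), B (v ∘ σ) = B v) (p : Fin (n + 1)) (x : W)
    (v : Fin n → W) : B (p.insertNth x v) = B (Fin.cons x v) := by
  rw [← hB (p.insertNth x v) p.cycleRange.symm, Fin.insertNth_comp_cycleRange_symm]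

lemma sum_map_cons_sub_mixVec {B : MultilinearMap R (fun _ : Fin (n + 1) => W) N}
    (hB : ∀ v (σ : Equiv.Perm (Fin (n + 1))), B (v ∘ σ) = B v) (φ ψ : W) :
    ∑ j ∈ range (n + 1), B (Fin.cons (φ - ψ) (mixVec φ ψ j)) = B (fun _ => φ) - B fun _ => ψ := by
  have hterm : ∀ j ∈ range (n + 1), B (Fin.cons (φ - ψ) (mixVec φ ψ j)) =
      B (mixVec φ ψ (j + 1)) - B (mixVec φ ψ j) := by
    intro j hj
    let p : Fin (n + 1) := ⟨j, mem_range.1 hj⟩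
    rw [mixVec_succ_eq_insertNth φ ψ p, mixVec_eq_insertNth φ ψ p, map_insertNth_eq_map_cons hB,
      map_insertNth_eq_map_cons hB, map_cons_sub]
  rw [sum_congr rfl hterm, sum_range_sub (fun j => B (mixVec φ ψ j)), mixVec_of_le φ ψ le_rfl,
    mixVec_zero]

end Multilinear

variable {𝕜 : Type*} [Field 𝕜] [LinearOrder 𝕜] [IsStrictOrderedRing 𝕜]
  {W : Type*} [AddCommGroup W] [Module 𝕜 W]

lemma map_cons_le_map_cons_sum {κ : Type*} [Fintype κ] {n : ℕ}
    (B : MultilinearMap 𝕜 (fun _ : Fin (n + 1) => W) 𝕜) (u φ : κ → W)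
    (hpos : ∀ (k : κ) (l : Fin n → κ), 0 ≤ B (Fin.cons (u k) (φ ∘ l))) (k : κ) (l : Fin n → κ) :
    B (Fin.cons (u k) (φ ∘ l)) ≤ B (Fin.cons (∑ i, u i) fun _ => ∑ i, φ i) := by
  classical
  let g : Fin (n + 1) → κ → W := Fin.cons u fun _ => φ
  have hg : ∀ f : Fin (n + 1) → κ,
      (fun i => g i (f i)) = Fin.cons (u (f 0)) (φ ∘ fun i => f i.succ) := by
    intro f
    funext i
    cases i using Fin.cases <;> rfl
  have hsum : (fun i => ∑ j, g i j) = Fin.cons (∑ i, u i) fun _ => ∑ i, φ i := by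
    funext i
    cases i using Fin.cases <;> rfl
  rw [← hsum, B.map_sum]
  simp only [hg]
  exact single_le_sum (f := fun f : Fin (n + 1) → κ =>
      B (Fin.cons (u (f 0)) (φ ∘ fun i => f i.succ)))
    (fun f _ => hpos _ _) (mem_univ (Fin.cons k l : Fin (n + 1) → κ))

lemma concaveOn_of_exists_supergradient {s : Set W} {f : W → 𝕜} (hs : Convex 𝕜 s)
    (h : ∀ z ∈ s, ∃ ℓ : W →ₗ[𝕜] 𝕜, ∀ x ∈ s, f x - f z ≤ ℓ (x - z)) : ConcaveOn 𝕜 s f := by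
  refine ⟨hs, fun x hx y hy a b ha hb hab => ?_⟩
  obtain ⟨ℓ, hℓ⟩ := h _ (hs hx hy ha hb hab)
  have hx' := mul_le_mul_of_nonneg_left (hℓ x hx) ha
  have hy' := mul_le_mul_of_nonneg_left (hℓ y hy) hb
  simp only [map_sub, map_add, map_smul, smul_eq_mul] at hx' hy' ⊢
  obtain rfl : b = 1 - a := eq_sub_of_add_eq' hab
  linarith

variable {m : ℕ}

/-- The part of an abstract Monge–Ampère pairing that controls `I` and `J`: the form `B` is
symmetric and satisfies the Hodge index inequality on differences of elements of `F`. -/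
structure IsHodgeOn (B : MultilinearMap 𝕜 (fun _ : Fin (m + 2) => W) 𝕜) (F : Set W) : Prop where
  symm : ∀ v (σ : Equiv.Perm (Fin (m + 2))), B (v ∘ σ) = B v
  hodge : ∀ φ ∈ F, ∀ ψ ∈ F, ∀ g : Fin m → W, (∀ i, g i ∈ F) →
    B (Fin.cons (φ - ψ) (Fin.cons (φ - ψ) g)) ≤ 0

/-- The Monge–Ampère energy `E(φ, ψ)` of a multilinear form in `n + 1 = m + 2` arguments. -/
def energy (B : MultilinearMap 𝕜 (fun _ : Fin (m + 2) => W) 𝕜) (φ ψ : W) : 𝕜 :=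
  ((m : 𝕜) + 2)⁻¹ * ∑ j ∈ range (m + 2), B (Fin.cons (φ - ψ) (mixVec φ ψ j))

/-- The functional `J_ψ(φ)` of a multilinear form in `n + 1 = m + 2` arguments. -/
def jFun (B : MultilinearMap 𝕜 (fun _ : Fin (m + 2) => W) 𝕜) (ψ φ : W) : 𝕜 :=
  B (Fin.cons (φ - ψ) fun _ => ψ) - energy B φ ψ

namespace IsHodgeOn

variable {B : MultilinearMap 𝕜 (fun _ : Fin (m + 2) => W) 𝕜} {F : Set W} {φ ψ : W}

lemma antitone_map_cons_mixVec (hB : IsHodgeOn B F) (hφ : φ ∈ F) (hψ : ψ ∈ F) :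
    Antitone fun j => B (Fin.cons (φ - ψ) (mixVec φ ψ j)) := by
  refine antitone_nat_of_succ_le fun j => ?_
  rcases lt_or_ge j (m + 1) with hj | hj
  · let p : Fin (m + 1) := ⟨j, hj⟩
    have hfront : ∀ x, B (Fin.cons (φ - ψ) (p.insertNth x (mixVec φ ψ j : Fin m → W))) =
        B (Fin.cons x (Fin.cons (φ - ψ) (mixVec φ ψ j))) := fun x => by
      rw [← Fin.insertNth_succ_cons, map_insertNth_eq_map_cons hB.symm]
    rw [mixVec_succ_eq_insertNth φ ψ p, mixVec_eq_insertNth φ ψ p, hfront, hfront, ← sub_nonpos,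
      ← map_cons_sub]
    exact hB.hodge φ hφ ψ hψ _ (mixVec_mem hφ hψ j)
  · rw [mixVec_of_le φ ψ hj, mixVec_of_le φ ψ (hj.trans j.le_succ)]

lemma map_cons_mixVec_le (hB : IsHodgeOn B F) (hφ : φ ∈ F) (hψ : ψ ∈ F) (j : ℕ) :
    B (Fin.cons (φ - ψ) (mixVec φ ψ j)) ≤ B (Fin.cons (φ - ψ) fun _ => ψ) := by
  simpa only [mixVec_zero] using hB.antitone_map_cons_mixVec hφ hψ j.zero_le

lemma sum_map_cons_mixVec_le (hB : IsHodgeOn B F) (hφ : φ ∈ F) (hψ : ψ ∈ F) (k : ℕ) :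
    ∑ j ∈ range k, B (Fin.cons (φ - ψ) (mixVec φ ψ j)) ≤
      k * B (Fin.cons (φ - ψ) fun _ => ψ) := by
  simpa using sum_le_card_nsmul (range k) _ _ fun j _ => hB.map_cons_mixVec_le hφ hψ j

lemma concaveOn_diag (hB : IsHodgeOn B F) (hF : Convex 𝕜 F) :
    ConcaveOn 𝕜 F fun φ => B fun _ => φ := by
  refine concaveOn_of_exists_supergradient hF fun ψ hψ =>
    ⟨((m + 2 : ℕ) : 𝕜) • firstSlot B fun _ => ψ, fun φ hφ => ?_⟩
  rw [← sum_map_cons_sub_mixVec hB.symm]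
  simpa using hB.sum_map_cons_mixVec_le hφ hψ (m + 2)

lemma convexOn_jFun (hB : IsHodgeOn B F) (hF : Convex 𝕜 F) (ψ : W) :
    ConvexOn 𝕜 F (jFun B ψ) := by
  let ℓ := firstSlot B fun _ => ψ
  let c : 𝕜 := ((m : 𝕜) + 2)⁻¹
  have hc : 0 ≤ c := by positivity
  have hJ : jFun B ψ = fun φ => ℓ φ + c • (-(B fun _ => φ)) + (c * (B fun _ => ψ) - ℓ ψ) := by
    funext φ
    rw [jFun, energy, sum_map_cons_sub_mixVec hB.symm, map_cons_sub]
    simp only [firstSlot_apply, smul_eq_mul, ℓ, c]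
    ring
  rw [hJ]
  exact ((ℓ.convexOn hF).add ((hB.concaveOn_diag hF).neg.smul hc)).add_const _

lemma sub_map_cons_le_mul_jFun (hB : IsHodgeOn B F) (hφ : φ ∈ F) (hψ : ψ ∈ F) :
    B (Fin.cons (φ - ψ) fun _ => ψ) - B (Fin.cons (φ - ψ) fun _ => φ) ≤
      ((m : 𝕜) + 2) * jFun B ψ φ := by
  have hsum := hB.sum_map_cons_mixVec_le hφ hψ (m + 1)
  have hm : (m : 𝕜) + 2 ≠ 0 := by positivity
  rw [jFun, energy, mul_sub, mul_inv_cancel_left₀ hm, sum_range_succ, mixVec_of_le φ ψ le_rfl]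
  push_cast at hsum
  linarith

lemma mul_jFun_mean_le_sum (hB : IsHodgeOn B F) (hF : Convex 𝕜 F) (ψ : W)
    {φs : Fin (m + 2) → W} (hφs : ∀ i, φs i ∈ F) :
    ((m : 𝕜) + 2) * jFun B ψ (∑ i, ((m : 𝕜) + 2)⁻¹ • φs i) ≤ ∑ i, jFun B ψ (φs i) := by
  have hN : (0 : 𝕜) < (m : 𝕜) + 2 := by positivity
  have hJensen := (hB.convexOn_jFun hF ψ).map_sum_le (t := univ)
    (w := fun _ : Fin (m + 2) => ((m : 𝕜) + 2)⁻¹) (fun _ _ => by positivity)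
    (by simp [hN.ne']) fun i _ => hφs i
  rw [← smul_sum (s := univ) (f := fun i => jFun B ψ (φs i)), smul_eq_mul] at hJensen
  exact (le_inv_mul_iff₀ hN).1 hJensen

end IsHodgeOn

lemma map_cons_le_pow_mul_map_cons_mean (B : MultilinearMap 𝕜 (fun _ : Fin (m + 2) => W) 𝕜)
    (φref : W) (φs : Fin (m + 2) → W)
    (hpos : ∀ i (l : Fin (m + 1) → Fin (m + 2)), 0 ≤ B (Fin.cons (φref - φs i) (φs ∘ l))) :
    B (Fin.cons (φref - φs 0) fun i => φs i.succ) ≤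
      ((m : 𝕜) + 2) ^ (m + 2) * B (Fin.cons (φref - ∑ i, ((m : 𝕜) + 2)⁻¹ • φs i)
        fun _ => ∑ i, ((m : 𝕜) + 2)⁻¹ • φs i) := by
  have hN : (m : 𝕜) + 2 ≠ 0 := by positivity
  have hsum : ∑ i, φs i = ((m : 𝕜) + 2) • ∑ i, ((m : 𝕜) + 2)⁻¹ • φs i := by
    rw [← smul_sum, smul_inv_smul₀ hN]
  have hsumsub : ∑ i, (φref - φs i) =
      ((m : 𝕜) + 2) • (φref - ∑ i, ((m : 𝕜) + 2)⁻¹ • φs i) := by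
    rw [sum_sub_distrib, hsum, smul_sub, sum_const, card_univ, Fintype.card_fin,
      ← Nat.cast_smul_eq_nsmul 𝕜]
    push_cast
    rfl
  rw [← smul_eq_mul, ← map_cons_smul_const, ← hsum, ← hsumsub]
  exact map_cons_le_map_cons_sum B (fun i => φref - φs i) φs hpos 0 Fin.succ

lemma sum_inv_smul_mem {s : Set W} (hs : Convex 𝕜 s) {φs : Fin (m + 2) → W}
    (hφs : ∀ i, φs i ∈ s) : ∑ i, ((m : 𝕜) + 2)⁻¹ • φs i ∈ s := by
  have hN : (m : 𝕜) + 2 ≠ 0 := by positivity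
  exact hs.sum_mem (fun _ _ => by positivity) (by simp [hN]) fun i _ => hφs i

lemma IsHodgeOn.map_cons_le_add_sum_jFun {B : MultilinearMap 𝕜 (fun _ : Fin (m + 2) => W) 𝕜}
    {F : Set W} (hB : IsHodgeOn B F) (hF : Convex 𝕜 F) {φref : W} (href : φref ∈ F) {P : Set W}
    (hP : Convex 𝕜 P)
    (hpos : ∀ u ∈ P, ∀ g : Fin (m + 1) → W, (∀ i, g i ∈ F) → 0 ≤ B (Fin.cons u g)) {D : 𝕜}
    (hD : ∀ φ ∈ F, φref - φ ∈ P → B (Fin.cons (φref - φ) fun _ => φref) ≤ D)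
    {φs : Fin (m + 2) → W} (hφs : ∀ i, φs i ∈ F) (hφsP : ∀ i, φref - φs i ∈ P) :
    B (Fin.cons (φref - φs 0) fun i => φs i.succ) ≤
      ((m : 𝕜) + 2) ^ (m + 2) * (D + ∑ i, jFun B φref (φs i)) := by
  set ψ : W := ∑ i, ((m : 𝕜) + 2)⁻¹ • φs i
  have hψ : ψ ∈ F := sum_inv_smul_mem hF hφs
  have hψP : φref - ψ ∈ P := by
    have hconv : Convex 𝕜 {φ | φref - φ ∈ P} :=
      hP.affine_preimage (AffineMap.const 𝕜 W φref - AffineMap.id 𝕜 W)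
    exact sum_inv_smul_mem hconv hφsP
  have hI := hB.sub_map_cons_le_mul_jFun hψ href
  rw [map_cons_sub_rev, map_cons_sub_rev B (fun _ => ψ)] at hI
  have hpure : B (Fin.cons (φref - ψ) fun _ => ψ) ≤ D + ∑ i, jFun B φref (φs i) := by
    linarith [hD ψ hψ hψP, hB.mul_jFun_mean_le_sum hF φref hφs]
  calc B (Fin.cons (φref - φs 0) fun i => φs i.succ)
      ≤ ((m : 𝕜) + 2) ^ (m + 2) * B (Fin.cons (φref - ψ) fun _ => ψ) :=
        map_cons_le_pow_mul_map_cons_mean B φref φs fun i l =>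
          hpos _ (hφsP i) _ fun j => hφs (l j)
    _ ≤ ((m : 𝕜) + 2) ^ (m + 2) * (D + ∑ i, jFun B φref (φs i)) := by gcongr

end MongeAmpere

theorem mixed_MA_lower_bound_general {𝕜 : Type*} [Field 𝕜] [LinearOrder 𝕜]
    [IsStrictOrderedRing 𝕜] {W : Type*} [AddCommGroup W] [Module 𝕜 W] {m : ℕ}
    {B : MultilinearMap 𝕜 (fun _ : Fin (m + 2) => W) 𝕜} {F : Set W}
    (hB : MongeAmpere.IsHodgeOn B F) (hF : Convex 𝕜 F) {φref : W} (href : φref ∈ F) {P : Set W}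
    (hP : Convex 𝕜 P)
    (hpos : ∀ u ∈ P, ∀ g : Fin (m + 1) → W, (∀ i, g i ∈ F) → 0 ≤ B (Fin.cons u g)) {D : 𝕜}
    (hD : ∀ φ ∈ F, φref - φ ∈ P → B (Fin.cons (φref - φ) fun _ => φref) ≤ D)
    {φs : Fin (m + 2) → W} (hφs : ∀ i, φs i ∈ F) (hφsP : ∀ i, φref - φs i ∈ P) :
    B (Fin.cons (φs 0 - φref) fun _ => φref) - ((m : 𝕜) + 2) ^ (m + 3) *
        (D + univ.sup' univ_nonempty fun i => MongeAmpere.jFun B φref (φs i)) ≤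
      B (Fin.cons (φs 0 - φref) fun i => φs i.succ) := by
  set M := univ.sup' univ_nonempty fun i => MongeAmpere.jFun B φref (φs i)
  have href_nonneg := hpos _ (hφsP 0) (fun _ => φref) fun _ => href
  have hD_nonneg : 0 ≤ D := href_nonneg.trans (hD _ (hφs 0) (hφsP 0))
  have hsum : ∑ i, MongeAmpere.jFun B φref (φs i) ≤ ((m : 𝕜) + 2) * M := by
    simpa using sum_le_card_nsmul univ (fun i => MongeAmpere.jFun B φref (φs i)) M
      fun i hi => le_sup' (fun i => MongeAmpere.jFun B φref (φs i)) hi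
  have hN : (1 : 𝕜) ≤ (m : 𝕜) + 2 := by linarith [(m.cast_nonneg : (0 : 𝕜) ≤ m)]
  have hmixed : B (Fin.cons (φref - φs 0) fun i => φs i.succ) ≤
      ((m : 𝕜) + 2) ^ (m + 3) * (D + M) :=
    calc B (Fin.cons (φref - φs 0) fun i => φs i.succ)
        ≤ ((m : 𝕜) + 2) ^ (m + 2) * (D + ∑ i, MongeAmpere.jFun B φref (φs i)) :=
          hB.map_cons_le_add_sum_jFun hF href hP hpos hD hφs hφsP
      _ ≤ ((m : 𝕜) + 2) ^ (m + 2) * (((m : 𝕜) + 2) * D + ((m : 𝕜) + 2) * M) := by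
          gcongr
          exact le_mul_of_one_le_left hD_nonneg hN
      _ = ((m : 𝕜) + 2) ^ (m + 3) * (D + M) := by ring
  rw [MongeAmpere.map_cons_sub_rev, MongeAmpere.map_cons_sub_rev B (fun i => φs i.succ)]
  linarith

lemma MASetup.isHodgeOn {m : ℕ} {W : Type*} [AddCommGroup W] [Module ℝ W] (S : MASetup m W) :
    MongeAmpere.IsHodgeOn S.B S.F where
  symm := S.symm
  hodge φ hφ ψ hψ := S.hodge _ (Submodule.subset_span (Or.inl ⟨φ, hφ, ψ, hψ, rfl⟩))

/-- there is `C > 0` depending only on `n = m + 1` such that for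
every setup, reference `φ_ref ∈ F`, positivity cone `W₊ ⊆ W₀` (on which `B` is
nonnegative against `F`-arguments), constant `D ≥ 0` bounding
`B(φ_ref - φ, φ_ref, …, φ_ref) ≤ D` for sup-normalized `φ ∈ F`, and all
sup-normalized `φ₀, φ₁, …, φₙ ∈ F`:
`B(φ₀-φ_ref, φ₁, …, φₙ) ≥ B(φ₀-φ_ref, φ_ref, …, φ_ref) - C (D + maxᵢ J(φᵢ))`. -/
theorem mixed_MA_lower_bound (m : ℕ) :
    ∃ C : ℝ, 0 < C ∧
      ∀ (W : Type*) [AddCommGroup W] [Module ℝ W] (S : MASetup m W),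
        ∀ φref ∈ S.F,
          ∀ Wp : ConvexCone ℝ W, (Wp : Set W) ⊆ (S.W0 : Set W) →
            (∀ u ∈ Wp, ∀ g : Fin (m + 1) → W, (∀ i, g i ∈ S.F) →
              0 ≤ S.B (Fin.cons u g)) →
          ∀ D : ℝ, 0 ≤ D →
            (∀ φ ∈ S.F, φref - φ ∈ Wp →
              S.B (Fin.cons (φref - φ) fun _ => φref) ≤ D) →
          ∀ φs : Fin (m + 2) → W, (∀ i, φs i ∈ S.F) → (∀ i, φref - φs i ∈ Wp) →
            S.B (Fin.cons (φs 0 - φref) fun _ => φref) -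
                C * (D + Finset.univ.sup' Finset.univ_nonempty
                  fun i => S.Jfun φref (φs i)) ≤
              S.B (Fin.cons (φs 0 - φref) fun i => φs i.succ) :=
  ⟨((m : ℝ) + 2) ^ (m + 3), by positivity, fun _ _ _ S _ href Wp _ hpos _ _ hD _ hφs hφsWp =>
    mixed_MA_lower_bound_general S.isHodgeOn S.Fconv href Wp.convex hpos hD hφs hφsWp⟩
end
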